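/- Let F be a face of the Gelfand–Cetlin polytope P_λ, where λ has block structure k. Then φ(F) is a face of the ladder diagram Γ_k: it is a subgraph of Γ_k containing all terminal vertices which equals a union of positive paths. -/

import Mathlib

open Classical

noncomputable section

/-- Partial sums of the (0-indexed) sequence `k`: `nseq k i = k 0 + ⋯ + k (i-1)`;
so `nseq k i` is the paper's `n_i` for the sequence `(k_1, …, k_s) = (k 0, …, k (s-1))`. -/
def nseq (k : ℕ → ℕ) (i : ℕ) : ℕ := ∑ j ∈ Finset.range i, k j

/-- The set of terminal vertices `T_k = {(n_i, n - n_i) : 0 ≤ i ≤ s}` of the ladder diagram. -/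
def terminals (s : ℕ) (k : ℕ → ℕ) : Set (ℕ × ℕ) :=
  {v | ∃ i ≤ s, v = (nseq k i, nseq k s - nseq k i)}

/-- The vertex set of the ladder diagram `Γ_k`. -/
def ladderV (s : ℕ) (k : ℕ → ℕ) : Set (ℕ × ℕ) :=
  {v | ∃ t ∈ terminals s k, v.1 ≤ t.1 ∧ v.2 ≤ t.2}

/-- A unit grid step: one step to the right or one step up. -/
def gridStep (v w : ℕ × ℕ) : Prop :=
  w = (v.1 + 1, v.2) ∨ w = (v.1, v.2 + 1)

/-- The edge set of the ladder diagram `Γ_k`. -/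
def ladderE (s : ℕ) (k : ℕ → ℕ) : Set ((ℕ × ℕ) × (ℕ × ℕ)) :=
  {e | e.1 ∈ ladderV s k ∧ e.2 ∈ ladderV s k ∧ gridStep e.1 e.2}

/-- A combinatorial (directed) graph in the grid `ℤ_{≥0} × ℤ_{≥0}`,
given by a set of vertices and a set of edges. -/
@[ext] structure LGraph where
  V : Set (ℕ × ℕ)
  E : Set ((ℕ × ℕ) × (ℕ × ℕ))

/-- Subgraph inclusion order on grid graphs. -/
instance : PartialOrder LGraph where
  le γ γ' := γ.V ⊆ γ'.V ∧ γ.E ⊆ γ'.E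
  le_refl γ := ⟨subset_rfl, subset_rfl⟩
  le_trans a b c h h' := ⟨h.1.trans h'.1, h.2.trans h'.2⟩
  le_antisymm a b h h' := LGraph.ext (subset_antisymm h.1 h'.1) (subset_antisymm h.2 h'.2)

/-- The ladder diagram `Γ_k` as a grid graph. -/
def ladder (s : ℕ) (k : ℕ → ℕ) : LGraph :=
  ⟨ladderV s k, ladderE s k⟩

/-- A positive path: (the graph of) a shortest path in the ladder diagram `Γ_k`
from the origin `(0,0)` to a terminal vertex. -/
def IsPositivePath (s : ℕ) (k : ℕ → ℕ) (p : LGraph) : Prop :=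
  ∃ (m : ℕ) (f : ℕ → ℕ × ℕ),
    f 0 = (0, 0) ∧ f m ∈ terminals s k ∧
    (∀ i < m, gridStep (f i) (f (i + 1))) ∧
    (∀ i ≤ m, f i ∈ ladderV s k) ∧
    p.V = {v | ∃ i ≤ m, v = f i} ∧
    p.E = {e | ∃ i < m, e = (f i, f (i + 1))}

/-- A face of the ladder diagram `Γ_k`: a subgraph which contains all terminal
vertices and is a union of positive paths. -/
def IsLadderFace (s : ℕ) (k : ℕ → ℕ) (γ : LGraph) : Prop :=
  terminals s k ⊆ γ.V ∧
  ∃ P : Set LGraph, (∀ p ∈ P, IsPositivePath s k p) ∧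
    γ.V = ⋃ p ∈ P, LGraph.V p ∧ γ.E = ⋃ p ∈ P, LGraph.E p

/-- The dimension (first Betti number) of a face of a ladder diagram:
`|E(γ)| - |V(γ)| + 1`. -/
def ldim (γ : LGraph) : ℤ :=
  (γ.E.ncard : ℤ) - (γ.V.ncard : ℤ) + 1

/-- The index set `I = {(i,j) : i,j ≥ 1, i+j ≤ n}` of the coordinates of a
Gelfand–Cetlin pattern. -/
def GCIdx (n : ℕ) : Set (ℕ × ℕ) := {p | 1 ≤ p.1 ∧ 1 ≤ p.2 ∧ p.1 + p.2 ≤ n}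

/-- The entries of a Gelfand–Cetlin pattern `x`, extended by the boundary
condition `x_{i, n+1-i} = λ_i`. -/
def gcEntry (n : ℕ) (lam : ℕ → ℝ) (x : GCIdx n → ℝ) (p : ℕ × ℕ) : ℝ :=
  if h : p ∈ GCIdx n then x ⟨p, h⟩ else lam p.1

/-- The Gelfand–Cetlin polytope `P_λ`: the set of points `(x_{i,j})_{(i,j) ∈ I}`
with `x_{i,j+1} ≥ x_{i,j} ≥ x_{i+1,j}` for all `(i,j) ∈ I`, where
`x_{i,n+1-i} = λ_i`. -/
def GCPoly (n : ℕ) (lam : ℕ → ℝ) : Set (GCIdx n → ℝ) :=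
  {x | ∀ i j : ℕ, (i, j) ∈ GCIdx n →
    gcEntry n lam x (i, j) ≤ gcEntry n lam x (i, j + 1) ∧
    gcEntry n lam x (i + 1, j) ≤ gcEntry n lam x (i, j)}

/-- The subset of `P_λ` obtained by turning the inequalities
`x_{i,j+1} ≥ x_{i,j}` for `(i,j) ∈ SH` and `x_{i,j} ≥ x_{i+1,j}` for
`(i,j) ∈ SV` into equalities. -/
def GCFaceOf (n : ℕ) (lam : ℕ → ℝ) (SH SV : Set (ℕ × ℕ)) : Set (GCIdx n → ℝ) :=
  {x | x ∈ GCPoly n lam ∧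
    (∀ p ∈ SH, gcEntry n lam x (p.1, p.2 + 1) = gcEntry n lam x p) ∧
    (∀ p ∈ SV, gcEntry n lam x p = gcEntry n lam x (p.1 + 1, p.2))}

/-- A face of the GC polytope: a nonempty solution set of the system obtained
by replacing some of the defining inequalities by equalities. -/
def IsGCFace (n : ℕ) (lam : ℕ → ℝ) (F : Set (GCIdx n → ℝ)) : Prop :=
  F.Nonempty ∧ ∃ SH SV : Set (ℕ × ℕ), SH ⊆ GCIdx n ∧ SV ⊆ GCIdx n ∧
    F = GCFaceOf n lam SH SV

/-- The dimension of (a face of) the GC polytope: the dimension of its affine span. -/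
def GCdim (n : ℕ) (F : Set (GCIdx n → ℝ)) : ℕ :=
  Module.finrank ℝ (affineSpan ℝ F).direction

/-- `lam` (1-indexed) is weakly decreasing with block structure `k`: it is
constant on each block `(n_{i-1}, n_i]` and strictly decreases between
consecutive blocks. -/
def HasBlockStructure (s : ℕ) (k : ℕ → ℕ) (lam : ℕ → ℝ) : Prop :=
  (∀ i < s, ∀ a b : ℕ, nseq k i < a → a ≤ b → b ≤ nseq k (i + 1) → lam a = lam b) ∧
  (∀ i : ℕ, 1 ≤ i → i < s → lam (nseq k i + 1) < lam (nseq k i))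

/-- The edge set of the graph `φ(F)` associated to a subset `F` of the GC polytope. -/
def phiE (n : ℕ) (lam : ℕ → ℝ) (F : Set (GCIdx n → ℝ)) :
    Set ((ℕ × ℕ) × (ℕ × ℕ)) :=
  {e | (∃ i < n, e = ((0, i), (0, i + 1)) ∨ e = ((i, 0), (i + 1, 0))) ∨
    (∃ i j : ℕ, (i, j) ∈ GCIdx n ∧ e = ((i - 1, j), (i, j)) ∧
      ∃ x ∈ F, gcEntry n lam x (i, j) < gcEntry n lam x (i, j + 1)) ∨
    (∃ i j : ℕ, (i, j) ∈ GCIdx n ∧ e = ((i, j - 1), (i, j)) ∧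
      ∃ x ∈ F, gcEntry n lam x (i + 1, j) < gcEntry n lam x (i, j))}

/-- The graph `φ(F)`: its edges are given by `phiE` and its vertices are the
endpoints of its edges. -/
def phiGC (n : ℕ) (lam : ℕ → ℝ) (F : Set (GCIdx n → ℝ)) : LGraph where
  V := {v | ∃ e ∈ phiE n lam F, v = e.1 ∨ v = e.2}
  E := phiE n lam F

/-- The map `ψ`: for a subgraph `γ`, the set of points of `P_λ` where the
inequalities corresponding to the missing edges of `γ` become equalities. -/
def psiGC (n : ℕ) (lam : ℕ → ℝ) (γ : LGraph) : Set (GCIdx n → ℝ) :=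
  {x | x ∈ GCPoly n lam ∧ ∀ i j : ℕ, (i, j) ∈ GCIdx n →
    (((i - 1, j), (i, j)) ∉ γ.E → gcEntry n lam x (i, j) = gcEntry n lam x (i, j + 1)) ∧
    (((i, j - 1), (i, j)) ∉ γ.E → gcEntry n lam x (i, j) = gcEntry n lam x (i + 1, j))}
/-- The recursively defined point `x̄` of the proof of Lemma 2.6 (bijectivity):
`x̄_{i,j} = λ_i` if `i + j = n + 1`, and for `i + j ≤ n` it is determined from
`x̄_{i,j+1}` and `x̄_{i+1,j}` according to which of the two edges
`((i-1,j),(i,j))`, `((i,j-1),(i,j))` belong to `E`. -/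
def barX (n : ℕ) (lam : ℕ → ℝ) (E : Set ((ℕ × ℕ) × (ℕ × ℕ))) : ℕ → ℕ → ℝ
  | i, j =>
    if h1 : n + 1 ≤ i + j then lam i
    else if h2 : ((i - 1, j), (i, j)) ∈ E then
      if h3 : ((i, j - 1), (i, j)) ∈ E then
        (barX n lam E i (j + 1) + barX n lam E (i + 1) j) / 2
      else barX n lam E (i + 1) j
    else barX n lam E i (j + 1)
  termination_by i j => n + 1 - (i + j)
  decreasing_by all_goals omega

/-- `α, β : ℕ → ℕ` encode an element
`w = ((α_1,β_1),…,(α_{s-1},β_{s-1})) ∈ W_{s-1}`, with the conventions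
`α_0 = 0`, `β_0 = 1`, `α_s = 1`, `β_s = 0`. -/
def IsW (s : ℕ) (α β : ℕ → ℕ) : Prop :=
  (∀ i : ℕ, 1 ≤ i → i < s →
    (α i, β i) = (1, 0) ∨ (α i, β i) = (0, 1) ∨ (α i, β i) = (1, 1)) ∧
  α 0 = 0 ∧ β 0 = 1 ∧ α s = 1 ∧ β s = 0

/-- The edge set of the subgraph `g_w` of `Γ_k`: the horizontal edge into the
terminal vertex `v_i` when `α_i = 1` and the vertical edge into `v_i` when
`β_i = 1`. -/
def gwE (s : ℕ) (k α β : ℕ → ℕ) : Set ((ℕ × ℕ) × (ℕ × ℕ)) :=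
  {e | ∃ i ≤ s,
    (α i = 1 ∧
      e = ((nseq k i - 1, nseq k s - nseq k i), (nseq k i, nseq k s - nseq k i))) ∨
    (β i = 1 ∧
      e = ((nseq k i, nseq k s - nseq k i - 1), (nseq k i, nseq k s - nseq k i)))}

/-- The subgraph `g_w` of `Γ_k`. -/
def gwGraph (s : ℕ) (k α β : ℕ → ℕ) : LGraph where
  V := {v | ∃ e ∈ gwE s k α β, v = e.1 ∨ v = e.2}
  E := gwE s k α β

/-- The interleaved sequence `r_w(k) * w̃` of length `2s - 1` (0-indexed):
entry `2j` is `k''_{j+1} = k_{j+1} + 1 - α_{j+1} - β_j` and entry `2j + 1` is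
`w̃_{j+1} = α_{j+1} β_{j+1}`. -/
def rstar (s : ℕ) (k α β : ℕ → ℕ) (t : ℕ) : ℕ :=
  if t % 2 = 0 then k (t / 2) + 1 - α (t / 2 + 1) - β (t / 2)
  else α (t / 2 + 1) * β (t / 2 + 1)

/-- `α`-value of one of the three symbols `(1,0), (0,1), (1,1)`,
encoded as `0, 1, 2 : Fin 3` respectively. -/
def aW3 (c : Fin 3) : ℕ := if c = 1 then 0 else 1

/-- `β`-value of one of the three symbols `(1,0), (0,1), (1,1)`,
encoded as `0, 1, 2 : Fin 3` respectively. -/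
def bW3 (c : Fin 3) : ℕ := if c = 0 then 0 else 1

/-- The function `α` of the element of `W_{s-1}` encoded by
`c : Fin (s-1) → Fin 3` (with the conventions `α_0 = 0`, `α_s = 1`). -/
def alph (s : ℕ) (c : Fin (s - 1) → Fin 3) (i : ℕ) : ℕ :=
  if i = 0 then 0 else if h : i - 1 < s - 1 then aW3 (c ⟨i - 1, h⟩) else 1

/-- The function `β` of the element of `W_{s-1}` encoded by
`c : Fin (s-1) → Fin 3` (with the conventions `β_0 = 1`, `β_s = 0`). -/
def bet (s : ℕ) (c : Fin (s - 1) → Fin 3) (i : ℕ) : ℕ :=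
  if i = 0 then 1 else if h : i - 1 < s - 1 then bW3 (c ⟨i - 1, h⟩) else 0

/-- The interleaved sequence `r_w(k) * w̃` (of length `2s - 1`, 0-indexed) for
the element `w ∈ W_{s-1}` encoded by `c`. -/
def newk (s : ℕ) (c : Fin (s - 1) → Fin 3) (k : ℕ → ℕ) (t : ℕ) : ℕ :=
  if t % 2 = 0 then k (t / 2) + 1 - alph s c (t / 2 + 1) - bet s c (t / 2)
  else alph s c (t / 2 + 1) * bet s c (t / 2 + 1)

/-- `|w| = Σ_{i=1}^{s-1} α_i β_i` for the element `w ∈ W_{s-1}` encoded by `c`. -/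
def wsize (s : ℕ) (c : Fin (s - 1) → Fin 3) : ℕ :=
  ∑ j ∈ Finset.range (s - 1), alph s c (j + 1) * bet s c (j + 1)

/-- The subgraph `g_w` of `Γ_k` for the element `w ∈ W_{s-1}` encoded by `c`. -/
def gwGraph3 (s : ℕ) (k : ℕ → ℕ) (c : Fin (s - 1) → Fin 3) : LGraph :=
  gwGraph s k (alph s c) (bet s c)

/-- Union of two grid graphs (union of vertex sets and of edge sets). -/
def ugraph (γ δ : LGraph) : LGraph := ⟨γ.V ∪ δ.V, γ.E ∪ δ.E⟩

/-- The generating function `F_k(t) = Σ_{γ face of Γ_k} t^{dim γ}` of the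
`f`-vector of the ladder diagram `Γ_k`, as a formal power series in `t`:
the coefficient of `t^d` is the number of faces of `Γ_k` of dimension `d`. -/
def fpol (s : ℕ) (k : ℕ → ℕ) : PowerSeries ℤ :=
  PowerSeries.mk fun d =>
    (Set.ncard {γ : LGraph | IsLadderFace s k γ ∧ ldim γ = (d : ℤ)} : ℤ)

/-- The operator `Π_{i=1}^{s-1} (∂/∂x_i + ∂/∂x_{i+1} + t ∂/∂y_i)` applied to a
polynomial in the variables `x_1, x_2, … , y_1, y_2, …` (the variable `x_{i+1}`
is `Sum.inl i` and `y_{i+1}` is `Sum.inr i`) over `ℚ[t]`. -/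
def Lfold (s : ℕ) (f : MvPolynomial (ℕ ⊕ ℕ) (Polynomial ℚ)) :
    MvPolynomial (ℕ ⊕ ℕ) (Polynomial ℚ) :=
  (List.range (s - 1)).foldl
    (fun g i =>
      MvPolynomial.pderiv (Sum.inl i) g + MvPolynomial.pderiv (Sum.inl (i + 1)) g +
        (Polynomial.X : Polynomial ℚ) • MvPolynomial.pderiv (Sum.inr i) g) f

/-- The operator `D_w = Π_{i=1}^{s-1} (∂/∂x_i)^{1-α_i} (∂/∂x_{i+1})^{1-β_i}
(t ∂/∂y_i)^{α_i β_i}` for the element `w ∈ W_{s-1}` encoded by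
`c : Fin (s-1) → Fin 3` (`0 ↦ (1,0)`, `1 ↦ (0,1)`, `2 ↦ (1,1)`). -/
def DfoldC (s : ℕ) (c : Fin (s - 1) → Fin 3)
    (f : MvPolynomial (ℕ ⊕ ℕ) (Polynomial ℚ)) : MvPolynomial (ℕ ⊕ ℕ) (Polynomial ℚ) :=
  (List.finRange (s - 1)).foldl
    (fun g i =>
      if c i = 0 then MvPolynomial.pderiv (Sum.inl ((i : ℕ) + 1)) g
      else if c i = 1 then MvPolynomial.pderiv (Sum.inl (i : ℕ)) g
      else (Polynomial.X : Polynomial ℚ) • MvPolynomial.pderiv (Sum.inr (i : ℕ)) g) f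

/-- The operator `D_w` for the element `w ∈ W_{s-1}` encoded by `α, β : ℕ → ℕ`. -/
def DfoldW (s : ℕ) (α β : ℕ → ℕ)
    (f : MvPolynomial (ℕ ⊕ ℕ) (Polynomial ℚ)) : MvPolynomial (ℕ ⊕ ℕ) (Polynomial ℚ) :=
  (List.range (s - 1)).foldl
    (fun g j =>
      if α (j + 1) = 1 ∧ β (j + 1) = 1 then
        (Polynomial.X : Polynomial ℚ) • MvPolynomial.pderiv (Sum.inr j) g
      else if α (j + 1) = 1 then MvPolynomial.pderiv (Sum.inl (j + 1)) g
      else MvPolynomial.pderiv (Sum.inl j) g) f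

/-- Substitution of `0` for all the variables `y_j = Sum.inr j`. -/
def setYzero :
    MvPolynomial (ℕ ⊕ ℕ) (Polynomial ℚ) →ₐ[Polynomial ℚ] MvPolynomial (ℕ ⊕ ℕ) (Polynomial ℚ) :=
  MvPolynomial.aeval
    (Sum.elim (fun i => MvPolynomial.X (Sum.inl i)) fun _ => (0 : MvPolynomial (ℕ ⊕ ℕ) (Polynomial ℚ)))
end

/-!
Put `φ(F)` next to the pattern entries: for every pattern `x` in `P_λ` the four entries around an
interior vertex `(i, j)` satisfy `x_{i+1,j} ≤ x_{i,j}, x_{i+1,j+1} ≤ x_{i,j+1}`. Hence `φ(F)` has an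
edge into `(i, j)` iff some `x ∈ F` has `x_{i+1,j} < x_{i,j+1}`, and, below the antidiagonal, it has
an edge out of `(i, j)` under the same condition. On the antidiagonal the condition reads
`λ_{i+1} < λ_i`, which singles out the terminal vertices. So a walk in `φ(F)` can be
continued backwards until it reaches the origin and forwards until it reaches a terminal vertex,
that is, every edge lies on a positive path.
-/

section Walk

variable {α : Type*} {r r' : α → α → Prop} {a b c u v : α} {m : ℕ} {f : ℕ → α}

theorem exists_reflTransGen_of_wellFounded (hr : WellFounded r) {S T : Set α}
    (h : ∀ a ∈ S, a ∉ T → ∃ b ∈ S, r b a) (ha : a ∈ S) :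
    ∃ t ∈ T, Relation.ReflTransGen r t a := by
  induction a using hr.induction with
  | _ a ih =>
    by_cases haT : a ∈ T
    · exact ⟨a, haT, .refl⟩
    · obtain ⟨b, hbS, hba⟩ := h a ha haT
      obtain ⟨t, htT, htb⟩ := ih b hba hbS
      exact ⟨t, htT, htb.tail hba⟩

/-- The terms `f 0, …, f m` form a walk from `a` to `b` along the relation `r`. As in
`IsPositivePath`, the walk is encoded by a total function whose values beyond `m` are
irrelevant. -/
structure IsWalk (r : α → α → Prop) (a b : α) (m : ℕ) (f : ℕ → α) : Prop where
  head : f 0 = a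
  last : f m = b
  step : ∀ i < m, r (f i) (f (i + 1))

/-- The sequence `a, f 0, f 1, …`, used to extend a walk at its head. -/
def consSeq (a : α) (f : ℕ → α) : ℕ → α
  | 0 => a
  | i + 1 => f i

namespace IsWalk

theorem mono (w : IsWalk r a b m f) (h : ∀ u v, r u v → r' u v) : IsWalk r' a b m f :=
  ⟨w.head, w.last, fun i hi => h _ _ (w.step i hi)⟩

theorem cons (hab : r a b) (w : IsWalk r b c m f) : IsWalk r a c (m + 1) (consSeq a f) where
  head := rfl
  last := w.last
  step
    | 0, _ => by rw [← w.head] at hab; exact hab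
    | i + 1, hi => w.step i (Nat.lt_of_succ_lt_succ hi)

theorem exists_of_reflTransGen (h : Relation.ReflTransGen r a b) : ∃ m f, IsWalk r a b m f := by
  induction h using Relation.ReflTransGen.head_induction_on with
  | refl => exact ⟨0, fun _ => b, rfl, rfl, fun i hi => absurd hi i.not_lt_zero⟩
  | head hac _ ih =>
    obtain ⟨m, f, w⟩ := ih
    exact ⟨m + 1, consSeq _ f, w.cons hac⟩

theorem exists_through (hau : Relation.ReflTransGen r a u) (huv : r u v)
    (hvb : Relation.ReflTransGen r v b) :
    ∃ m f, IsWalk r a b m f ∧ ∃ i < m, f i = u ∧ f (i + 1) = v := by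
  induction hau using Relation.ReflTransGen.head_induction_on with
  | refl =>
    obtain ⟨m, f, w⟩ := exists_of_reflTransGen hvb
    exact ⟨m + 1, consSeq u f, w.cons huv, 0, m.succ_pos, rfl, w.head⟩
  | @head a c hac _ ih =>
    obtain ⟨m, f, w, i, hi, hiu, hiv⟩ := ih
    exact ⟨m + 1, consSeq a f, w.cons hac, i + 1, Nat.succ_lt_succ hi, hiu, hiv⟩

theorem apply_le_last [Preorder α] (w : IsWalk (· ≤ ·) a b m f) {i : ℕ} (hi : i ≤ m) :
    f i ≤ b := by
  induction hi using Nat.decreasingInduction with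
  | self => exact w.last.le
  | of_succ i hi ih => exact (w.step i hi).trans ih

end IsWalk

end Walk

section Ladder

variable {s : ℕ} {k : ℕ → ℕ} {u v : ℕ × ℕ}

theorem gridStep.le (h : gridStep u v) : u ≤ v := by
  rcases h with rfl | rfl <;> simp [Prod.le_def]

theorem gridStep.fst_add_snd (h : gridStep u v) : v.1 + v.2 = u.1 + u.2 + 1 := by
  rcases h with rfl | rfl <;> simp only <;> omega

theorem mem_ladderV_of_le_terminal {t : ℕ × ℕ} (ht : t ∈ terminals s k) (hv : v ≤ t) :
    v ∈ ladderV s k :=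
  ⟨t, ht, hv.1, hv.2⟩

namespace LGraph

variable {γ : LGraph} {a b : ℕ × ℕ} {m : ℕ} {f : ℕ → ℕ × ℕ}

/-- The graph traced out by the sequence `f 0, …, f m`: the terms are its vertices and the pairs of
consecutive terms its edges. -/
def ofSeq (m : ℕ) (f : ℕ → ℕ × ℕ) : LGraph :=
  ⟨{v | ∃ i ≤ m, v = f i}, {e | ∃ i < m, e = (f i, f (i + 1))}⟩

theorem isPositivePath_ofSeq (hb : b ∈ terminals s k) (w : IsWalk gridStep (0, 0) b m f) :
    IsPositivePath s k (ofSeq m f) := by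
  have hle : IsWalk (· ≤ ·) (0, 0) b m f := w.mono fun _ _ => gridStep.le
  exact ⟨m, f, w.head, w.last ▸ hb, w.step,
    fun i hi => mem_ladderV_of_le_terminal hb (hle.apply_le_last hi), rfl, rfl⟩

theorem ofSeq_le (hγ : ∀ e ∈ γ.E, e.1 ∈ γ.V) (hb : b ∈ γ.V)
    (w : IsWalk (fun u v => (u, v) ∈ γ.E) a b m f) : ofSeq m f ≤ γ := by
  constructor
  · rintro _ ⟨i, hi, rfl⟩
    rcases hi.lt_or_eq with hi | rfl
    · exact hγ _ (w.step i hi)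
    · exact w.last ▸ hb
  · rintro _ ⟨i, hi, rfl⟩
    exact w.step i hi

end LGraph

theorem IsPositivePath.endpoints_mem {p : LGraph} (hp : IsPositivePath s k p)
    {e : (ℕ × ℕ) × (ℕ × ℕ)} (he : e ∈ p.E) : e.1 ∈ p.V ∧ e.2 ∈ p.V := by
  obtain ⟨m, f, -, -, -, -, hV, hE⟩ := hp
  rw [hE] at he
  obtain ⟨i, hi, rfl⟩ := he
  rw [hV]
  exact ⟨⟨i, hi.le, rfl⟩, ⟨i + 1, hi, rfl⟩⟩

theorem isLadderFace_of_forall_edge {γ : LGraph}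
    (hV : ∀ v, v ∈ γ.V ↔ ∃ e ∈ γ.E, v = e.1 ∨ v = e.2) (hT : terminals s k ⊆ γ.V)
    (hE : ∀ e ∈ γ.E, ∃ p, IsPositivePath s k p ∧ p ≤ γ ∧ e ∈ p.E) :
    IsLadderFace s k γ := by
  refine ⟨hT, {p | IsPositivePath s k p ∧ p ≤ γ}, fun p hp => hp.1, ?_, ?_⟩
  · refine Set.Subset.antisymm (fun v hv => ?_) (Set.iUnion₂_subset fun p hp => hp.2.1)
    obtain ⟨e, he, hve⟩ := (hV v).1 hv
    obtain ⟨p, hp, hpγ, hep⟩ := hE e he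
    refine Set.mem_biUnion (show p ∈ {p | _} from ⟨hp, hpγ⟩) ?_
    rcases hve with rfl | rfl
    exacts [(hp.endpoints_mem hep).1, (hp.endpoints_mem hep).2]
  · refine Set.Subset.antisymm (fun e he => ?_) (Set.iUnion₂_subset fun p hp => hp.2.2)
    obtain ⟨p, hp, hpγ, hep⟩ := hE e he
    exact Set.mem_biUnion (show p ∈ {p | _} from ⟨hp, hpγ⟩) hep

theorem isLadderFace_of_exists_edge {γ : LGraph} {n : ℕ}
    (hV : ∀ v, v ∈ γ.V ↔ ∃ e ∈ γ.E, v = e.1 ∨ v = e.2) (hT : terminals s k ⊆ γ.V)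
    (hstep : ∀ u v, (u, v) ∈ γ.E → gridStep u v) (hn : ∀ v ∈ γ.V, v.1 + v.2 ≤ n)
    (hin : ∀ v ∈ γ.V, v ≠ (0, 0) → ∃ u, (u, v) ∈ γ.E)
    (hout : ∀ v ∈ γ.V, v ∉ terminals s k → ∃ w, (v, w) ∈ γ.E) :
    IsLadderFace s k γ := by
  have tail_mem : ∀ e ∈ γ.E, e.1 ∈ γ.V := fun e he => (hV _).2 ⟨e, he, .inl rfl⟩
  have head_mem : ∀ e ∈ γ.E, e.2 ∈ γ.V := fun e he => (hV _).2 ⟨e, he, .inr rfl⟩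
  have wf_edge : WellFounded fun u v => (u, v) ∈ γ.E := by
    refine Subrelation.wf (fun {u v} huv => ?_)
      (measure fun v : ℕ × ℕ => v.1 + v.2).wf
    have hstep_uv := (hstep _ _ huv).fst_add_snd
    change u.1 + u.2 < v.1 + v.2
    lia
  have wf_swap : WellFounded (Function.swap fun u v => (u, v) ∈ γ.E) := by
    refine Subrelation.wf (fun {v u} huv => ?_)
      (measure fun v : ℕ × ℕ => n - (v.1 + v.2)).wf
    have hstep_uv := (hstep _ _ huv).fst_add_snd
    have hn_v := hn _ (head_mem _ huv)
    change n - (v.1 + v.2) < n - (u.1 + u.2)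
    dsimp only at hn_v
    lia
  refine isLadderFace_of_forall_edge hV hT fun ⟨u, v⟩ huv => ?_
  obtain ⟨_, rfl, from_origin⟩ := exists_reflTransGen_of_wellFounded wf_edge (T := {(0, 0)})
    (fun v hv hv0 => (hin v hv hv0).imp fun _ huv => ⟨tail_mem _ huv, huv⟩) (tail_mem _ huv)
  obtain ⟨t, ht, to_terminal⟩ := exists_reflTransGen_of_wellFounded wf_swap (T := terminals s k)
    (fun v hv hvT => (hout v hv hvT).imp fun _ hvw => ⟨head_mem _ hvw, hvw⟩) (head_mem _ huv)
  obtain ⟨m, f, w, i, hi, rfl, rfl⟩ :=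
    IsWalk.exists_through from_origin huv (Relation.reflTransGen_swap.1 to_terminal)
  exact ⟨LGraph.ofSeq m f,
    LGraph.isPositivePath_ofSeq ht (w.mono hstep),
    LGraph.ofSeq_le tail_mem (hT ht) w, i, hi, rfl⟩

end Ladder

section BlockStructure

variable {s : ℕ} {k : ℕ → ℕ} {lam : ℕ → ℝ} {i : ℕ}

theorem nseq_zero (k : ℕ → ℕ) : nseq k 0 = 0 :=
  Finset.sum_range_zero k

theorem monotone_nseq (k : ℕ → ℕ) : Monotone (nseq k) :=
  fun _ _ h => Finset.sum_le_sum_of_subset (Finset.range_mono h)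

theorem mem_terminals_iff {v : ℕ × ℕ} :
    v ∈ terminals s k ↔ v.1 + v.2 = nseq k s ∧ ∃ l ≤ s, v.1 = nseq k l := by
  constructor
  · rintro ⟨l, hl, rfl⟩
    exact ⟨Nat.add_sub_of_le (monotone_nseq k hl), l, hl, rfl⟩
  · rintro ⟨hsum, l, hl, hv⟩
    exact ⟨l, hl, Prod.ext hv (by lia)⟩

theorem exists_nseq_le_lt (hi : i < nseq k s) :
    ∃ l < s, nseq k l ≤ i ∧ i < nseq k (l + 1) := by
  induction s with
  | zero => simp [nseq_zero] at hi
  | succ s ih =>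
    rcases lt_or_ge i (nseq k s) with his | his
    · obtain ⟨l, hl, h⟩ := ih his
      exact ⟨l, hl.trans s.lt_succ_self, h⟩
    · exact ⟨s, s.lt_succ_self, his, hi⟩

theorem HasBlockStructure.lt_iff_exists_eq_nseq (hlam : HasBlockStructure s k lam) (h0 : 0 < i)
    (hi : i < nseq k s) : lam (i + 1) < lam i ↔ ∃ l ≤ s, i = nseq k l := by
  constructor
  · intro hlt
    obtain ⟨l, hl, hle, hlt'⟩ := exists_nseq_le_lt hi
    refine ⟨l, hl.le, hle.antisymm' (not_lt.1 fun hl_lt => hlt.ne' ?_)⟩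
    exact hlam.1 l hl i (i + 1) hl_lt i.le_succ hlt'
  · rintro ⟨l, hl, rfl⟩
    have hl0 : l ≠ 0 := by rintro rfl; exact h0.ne' (nseq_zero k)
    have hls : l ≠ s := by rintro rfl; exact hi.false
    exact hlam.2 l (Nat.pos_of_ne_zero hl0) (hl.lt_of_ne hls)

end BlockStructure

section PhiGraph

variable {n : ℕ} {lam : ℕ → ℝ} {F : Set (GCIdx n → ℝ)} {i j : ℕ} {p u v w : ℕ × ℕ}

theorem gcEntry_of_lt (x : GCIdx n → ℝ) (hp : n < p.1 + p.2) : gcEntry n lam x p = lam p.1 :=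
  dif_neg fun h => h.2.2.not_gt hp

theorem mem_phiE_left_boundary (hi : i < n) : ((0, i), (0, i + 1)) ∈ phiE n lam F :=
  .inl ⟨i, hi, .inl rfl⟩

theorem mem_phiE_bottom_boundary (hi : i < n) : ((i, 0), (i + 1, 0)) ∈ phiE n lam F :=
  .inl ⟨i, hi, .inr rfl⟩

theorem mem_phiE_right_iff (hj : 0 < j) :
    ((i, j), (i + 1, j)) ∈ phiE n lam F ↔ (i + 1, j) ∈ GCIdx n ∧
      ∃ x ∈ F, gcEntry n lam x (i + 1, j) < gcEntry n lam x (i + 1, j + 1) := by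
  constructor
  · rintro (⟨a, -, h | h⟩ | ⟨a, b, hab, h, hx⟩ | ⟨a, b, -, h, -⟩) <;>
      simp only [Prod.mk.injEq] at h
    · lia
    · lia
    · obtain ⟨-, rfl, rfl⟩ := h
      exact ⟨hab, hx⟩
    · lia
  · rintro ⟨hij, hx⟩
    exact .inr (.inl ⟨i + 1, j, hij, rfl, hx⟩)

theorem mem_phiE_up_iff (hi : 0 < i) :
    ((i, j), (i, j + 1)) ∈ phiE n lam F ↔ (i, j + 1) ∈ GCIdx n ∧
      ∃ x ∈ F, gcEntry n lam x (i + 1, j + 1) < gcEntry n lam x (i, j + 1) := by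
  constructor
  · rintro (⟨a, -, h | h⟩ | ⟨a, b, -, h, -⟩ | ⟨a, b, hab, h, hx⟩) <;>
      simp only [Prod.mk.injEq] at h
    · lia
    · lia
    · lia
    · obtain ⟨-, rfl, rfl⟩ := h
      exact ⟨hab, hx⟩
  · rintro ⟨hij, hx⟩
    exact .inr (.inr ⟨i, j + 1, hij, rfl, hx⟩)

theorem gridStep_of_mem_phiE (huv : (u, v) ∈ phiE n lam F) : gridStep u v := by
  rcases huv with ⟨a, -, h | h⟩ | ⟨a, b, hab, h, -⟩ | ⟨a, b, hab, h, -⟩ <;>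
    obtain ⟨rfl, rfl⟩ := Prod.mk.inj h
  · exact .inr rfl
  · exact .inl rfl
  · exact .inl (Prod.ext (Nat.sub_add_cancel hab.1).symm rfl)
  · exact .inr (Prod.ext rfl (Nat.sub_add_cancel hab.2.1).symm)

theorem head_fst_add_snd_le_of_mem_phiE (huv : (u, v) ∈ phiE n lam F) : v.1 + v.2 ≤ n := by
  rcases huv with ⟨a, ha, h | h⟩ | ⟨a, b, hab, h, -⟩ | ⟨a, b, hab, h, -⟩ <;>
    obtain ⟨rfl, rfl⟩ := Prod.mk.inj h
  · simpa using ha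
  · simpa using ha
  · exact hab.2.2
  · exact hab.2.2

theorem tail_fst_add_snd_lt_of_mem_phiE (huv : (u, v) ∈ phiE n lam F) : u.1 + u.2 < n := by
  have hstep := (gridStep_of_mem_phiE huv).fst_add_snd
  have hle := head_fst_add_snd_le_of_mem_phiE huv
  lia

theorem fst_add_snd_le_of_mem_phiGC_V (hv : v ∈ (phiGC n lam F).V) : v.1 + v.2 ≤ n := by
  obtain ⟨⟨u, w⟩, huw, rfl | rfl⟩ := hv
  · exact (tail_fst_add_snd_lt_of_mem_phiE huw).le
  · exact head_fst_add_snd_le_of_mem_phiE huw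

/-- Some pattern in `F` separates the two entries `x_{i+1,j} ≤ x_{i,j+1}` diagonally opposite at the
vertex `p = (i, j)`. This is the local condition for `p` to be a vertex of `φ(F)`. -/
def HasGap (n : ℕ) (lam : ℕ → ℝ) (F : Set (GCIdx n → ℝ)) (p : ℕ × ℕ) : Prop :=
  ∃ x ∈ F, gcEntry n lam x (p.1 + 1, p.2) < gcEntry n lam x (p.1, p.2 + 1)

theorem hasGap_iff_of_add_eq (hne : F.Nonempty) (hp : p.1 + p.2 = n) :
    HasGap n lam F p ↔ lam (p.1 + 1) < lam p.1 := by
  have entries (x : GCIdx n → ℝ) : gcEntry n lam x (p.1 + 1, p.2) = lam (p.1 + 1) ∧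
      gcEntry n lam x (p.1, p.2 + 1) = lam p.1 :=
    ⟨gcEntry_of_lt x (by dsimp only; lia), gcEntry_of_lt x (by dsimp only; lia)⟩
  obtain ⟨x₀, hx₀⟩ := hne
  simp only [HasGap, entries]
  exact ⟨fun ⟨_, _, h⟩ => h, fun h => ⟨x₀, hx₀, h⟩⟩

theorem HasGap.exists_edge_to (h : HasGap n lam F p) (hp : p ∈ GCIdx n) :
    ∃ u, (u, p) ∈ phiE n lam F := by
  obtain ⟨x, hx, hlt⟩ := h
  rcases hlt.gt_or_lt (gcEntry n lam x p) with hlt | hlt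
  · exact ⟨_, .inr (.inr ⟨p.1, p.2, hp, rfl, x, hx, hlt⟩)⟩
  · exact ⟨_, .inr (.inl ⟨p.1, p.2, hp, rfl, x, hx, hlt⟩)⟩

theorem HasGap.exists_edge_from (h : HasGap n lam F (i, j)) (hi : 0 < i) (hj : 0 < j)
    (hij : i + j < n) : ∃ w, ((i, j), w) ∈ phiE n lam F := by
  obtain ⟨x, hx, hlt⟩ := h
  rcases hlt.gt_or_lt (gcEntry n lam x (i + 1, j + 1)) with hlt | hlt
  · exact ⟨_, (mem_phiE_right_iff hj).2 ⟨⟨i.succ_pos, hj, by dsimp only; lia⟩, x, hx, hlt⟩⟩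
  · exact ⟨_, (mem_phiE_up_iff hi).2 ⟨⟨hi, j.succ_pos, hij⟩, x, hx, hlt⟩⟩

theorem hasGap_of_edge_to (hF : F ⊆ GCPoly n lam) (hi : 0 < i) (hj : 0 < j)
    (he : (u, (i, j)) ∈ phiE n lam F) : HasGap n lam F (i, j) := by
  obtain ⟨a, b⟩ := u
  rcases gridStep_of_mem_phiE he with h | h <;> obtain ⟨rfl, rfl⟩ := Prod.mk.inj h
  · obtain ⟨hij, x, hx, hlt⟩ := (mem_phiE_right_iff hj).1 he
    exact ⟨x, hx, (hF hx _ _ hij).2.trans_lt hlt⟩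
  · obtain ⟨hij, x, hx, hlt⟩ := (mem_phiE_up_iff hi).1 he
    exact ⟨x, hx, hlt.trans_le (hF hx _ _ hij).1⟩

theorem hasGap_of_edge_from (hF : F ⊆ GCPoly n lam) (hi : 0 < i) (hj : 0 < j)
    (he : ((i, j), w) ∈ phiE n lam F) : HasGap n lam F (i, j) := by
  have hij : i + j < n := tail_fst_add_snd_lt_of_mem_phiE he
  rcases gridStep_of_mem_phiE he with rfl | rfl
  · obtain ⟨-, x, hx, hlt⟩ := (mem_phiE_right_iff hj).1 he
    exact ⟨x, hx, hlt.trans_le (hF hx i (j + 1) ⟨hi, j.succ_pos, hij⟩).2⟩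
  · obtain ⟨-, x, hx, hlt⟩ := (mem_phiE_up_iff hi).1 he
    have hij' : (i + 1, j) ∈ GCIdx n := ⟨i.succ_pos, hj, by dsimp only; lia⟩
    exact ⟨x, hx, (hF hx (i + 1) j hij').1.trans_lt hlt⟩

theorem hasGap_of_mem_phiGC_V (hF : F ⊆ GCPoly n lam) (hi : 0 < i) (hj : 0 < j)
    (hv : (i, j) ∈ (phiGC n lam F).V) : HasGap n lam F (i, j) := by
  obtain ⟨⟨u, w⟩, he, rfl | rfl⟩ := hv
  · exact hasGap_of_edge_from hF hi hj he
  · exact hasGap_of_edge_to hF hi hj he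

theorem exists_edge_to_of_mem_phiGC_V (hF : F ⊆ GCPoly n lam) (hv : v ∈ (phiGC n lam F).V)
    (hv0 : v ≠ (0, 0)) : ∃ u, (u, v) ∈ phiE n lam F := by
  have hle := fst_add_snd_le_of_mem_phiGC_V hv
  obtain ⟨_ | i, _ | j⟩ := v
  · exact absurd rfl hv0
  · exact ⟨_, mem_phiE_left_boundary (by lia)⟩
  · exact ⟨_, mem_phiE_bottom_boundary (by lia)⟩
  · have hgap := hasGap_of_mem_phiGC_V hF i.succ_pos j.succ_pos hv
    exact hgap.exists_edge_to ⟨i.succ_pos, j.succ_pos, hle⟩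

end PhiGraph

section Terminals

variable {s : ℕ} {k : ℕ → ℕ} {lam : ℕ → ℝ} {F : Set (GCIdx (nseq k s) → ℝ)} {v : ℕ × ℕ}

theorem HasBlockStructure.hasGap_iff_mem_terminals (hlam : HasBlockStructure s k lam)
    (hne : F.Nonempty) (h1 : 0 < v.1) (h2 : 0 < v.2) (hv : v.1 + v.2 = nseq k s) :
    HasGap (nseq k s) lam F v ↔ v ∈ terminals s k := by
  rw [hasGap_iff_of_add_eq hne hv, hlam.lt_iff_exists_eq_nseq h1 (by lia), mem_terminals_iff,
    and_iff_right hv]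

theorem exists_edge_from_of_notMem_terminals (hlam : HasBlockStructure s k lam)
    (hne : F.Nonempty) (hF : F ⊆ GCPoly (nseq k s) lam) (hv : v ∈ (phiGC (nseq k s) lam F).V)
    (hvT : v ∉ terminals s k) : ∃ w, (v, w) ∈ phiE (nseq k s) lam F := by
  have hle := fst_add_snd_le_of_mem_phiGC_V hv
  have left_terminal : (0, nseq k s) ∈ terminals s k :=
    mem_terminals_iff.2 ⟨Nat.zero_add _, 0, s.zero_le, (nseq_zero k).symm⟩
  have bottom_terminal : (nseq k s, 0) ∈ terminals s k :=
    mem_terminals_iff.2 ⟨Nat.add_zero _, s, le_rfl, rfl⟩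
  obtain ⟨i, j⟩ := v
  rcases i.eq_zero_or_pos with rfl | hi
  · have hj : j ≠ nseq k s := by rintro rfl; exact hvT left_terminal
    exact ⟨_, mem_phiE_left_boundary (by lia)⟩
  rcases j.eq_zero_or_pos with rfl | hj
  · have hi : i ≠ nseq k s := by rintro rfl; exact hvT bottom_terminal
    exact ⟨_, mem_phiE_bottom_boundary (by lia)⟩
  have hgap := hasGap_of_mem_phiGC_V hF hi hj hv
  rcases hle.lt_or_eq with hlt | heq
  · exact hgap.exists_edge_from hi hj hlt
  · exact absurd ((hlam.hasGap_iff_mem_terminals hne hi hj heq).1 hgap) hvT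

theorem terminals_subset_phiGC_V (hpos : 0 < nseq k s) (hlam : HasBlockStructure s k lam)
    (hne : F.Nonempty) : terminals s k ⊆ (phiGC (nseq k s) lam F).V := by
  intro v hv
  have hsum := (mem_terminals_iff.1 hv).1
  suffices ∃ u, (u, v) ∈ phiE (nseq k s) lam F by
    obtain ⟨u, hu⟩ := this
    exact ⟨_, hu, .inr rfl⟩
  obtain ⟨_ | i, _ | j⟩ := v
  · exact absurd hsum hpos.ne
  · exact ⟨_, mem_phiE_left_boundary (by lia)⟩
  · exact ⟨_, mem_phiE_bottom_boundary (by lia)⟩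
  · have hgap := (hlam.hasGap_iff_mem_terminals hne i.succ_pos j.succ_pos hsum).2 hv
    exact hgap.exists_edge_to ⟨i.succ_pos, j.succ_pos, hsum.le⟩

end Terminals

theorem phiGC_isFace_general (s : ℕ) (k : ℕ → ℕ) (hpos : 0 < nseq k s) (lam : ℕ → ℝ)
    (hlam : HasBlockStructure s k lam) (F : Set (GCIdx (nseq k s) → ℝ)) (hne : F.Nonempty)
    (hF : F ⊆ GCPoly (nseq k s) lam) : IsLadderFace s k (phiGC (nseq k s) lam F) :=
  isLadderFace_of_exists_edge (fun _ => Iff.rfl) (terminals_subset_phiGC_V hpos hlam hne)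
    (fun _ _ => gridStep_of_mem_phiE) (fun _ => fst_add_snd_le_of_mem_phiGC_V)
    (fun _ => exists_edge_to_of_mem_phiGC_V hF)
    (fun _ => exists_edge_from_of_notMem_terminals hlam hne hF)

/-- Corollary 2.4. For any face `F` of the Gelfand–Cetlin
polytope `P_λ`, the graph `φ(F)` is a face of the ladder diagram `Γ_k`. -/
theorem phiGC_isFace (s : ℕ) (hs : 1 ≤ s) (k : ℕ → ℕ) (hk : ∀ i < s, 0 < k i)
    (lam : ℕ → ℝ) (hlam : HasBlockStructure s k lam)
    (F : Set (GCIdx (nseq k s) → ℝ)) (hF : IsGCFace (nseq k s) lam F) :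
    IsLadderFace s k (phiGC (nseq k s) lam F) := by
  obtain ⟨hne, SH, SV, -, -, rfl⟩ := hF
  have hpos : 0 < nseq k s :=
    Finset.sum_pos (fun i hi => hk i (Finset.mem_range.1 hi)) ⟨0, Finset.mem_range.2 hs⟩
  exact phiGC_isFace_general s k hpos lam hlam _ hne fun _ hx => hx.1
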